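/- Let T be a finite set with a quasi-metric d : T × T → ℝ₊ (d is symmetric and d(x,x) = 0 for all x) satisfying diam(T) ≤ 1, and let n be a positive integer. Equip T^n with the normalized Hamming quasi-metric d_n(x,y) = n^{-1} Σ_{i=1}^n d(x(i), y(i)). Then for every set A ⊂ T^n and every 0 < ε < 1, log N(A, d_n, ε) ≤ C log²(|T|/ε) · VC_d(A), where C is an absolute constant, N(A, d_n, ε) is the minimal number of d_n-balls of radius ε needed to cover A, and VC_d(A) is the VC dimension of A with respect to d. -/

import Mathlib

/-!
The argument compares lower and upper bounds for a weighted count of the cells (products of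
separated pairs) shattered by a maximal `ε`-separated set `B ⊆ A`, where a cell of dimension `k`
has weight `w ^ k` and `w = 12 v / (ε n)`, `v = VC_d(A)`.

Since `d ≤ 1`, any two points of `B` are separated in at least `ε n` coordinates. By pigeonhole
(`card_good`), for at least `ε n / 4` coordinates `i` there are separated `a, b ∈ T` such that both
fibres `{x i = a}` and `{x i = b}` of `B` have size at least `ε / (4 |T|²)` times that of `B`. A cell
shattered by either fibre is shattered by `B`, and a cell shattered by both can be enlarged by the
pair `(a, b)` at `i` (`Shat.update`). If the union of the two families of cells is never heavy,
then the intersections are heavy for all good `i`, and the enlargements over all good coordinates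
are, each being counted at most `v` times, heavy as well. In either case the weight grows by a
factor `3 / 2` while the cardinality grows by a factor `4 |T|² / ε` (`growth`).

On the other hand no cell has dimension above `v`, which bounds the total weight by
`(12 e |T|² / ε) ^ v` whatever `n` is (`cellWeight_le`): the weight `w` is tuned so that `n`
cancels. Comparing logarithms (`numeric`) gives the bound with the square of `log (|T| / ε)`.
-/

/-- The covering number `N(A, ρ, ε)` of a set `A` in a quasi-metric space `(S, ρ)`:
the minimal number of `ρ`-balls of radius `ε` needed to cover `A`. -/
noncomputable def covNQMetric {S : Type*} (ρ : S → S → ℝ) (A : Set S) (ε : ℝ) : ℕ :=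
  sInf {m : ℕ | ∃ s : Finset S, s.card = m ∧ ∀ a ∈ A, ∃ c ∈ s, ρ a c ≤ ε}

/-- The VC dimension `VC_d(A, t)` of `A ⊆ Tⁿ` at scale `t`, with respect to the quasi-metric
`d` on `T`: the maximal cardinality of a set `σ` of coordinates such that the projection of `A`
onto the coordinates in `σ` contains a product `∏_{i ∈ σ} {a i, b i}` with `d (a i) (b i) ≥ t`
for all `i ∈ σ`. -/
noncomputable def vcDimQ {T : Type*} {n : ℕ} (d : T → T → ℝ) (A : Set (Fin n → T))
    (t : ℝ) : ℕ :=
  sSup {m : ℕ | ∃ σ : Finset (Fin n), σ.card = m ∧ ∃ a b : Fin n → T,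
    (∀ i ∈ σ, t ≤ d (a i) (b i)) ∧
    ∀ z : Fin n → T, (∀ i ∈ σ, z i = a i ∨ z i = b i) → ∃ k ∈ A, ∀ i ∈ σ, k i = z i}

/-- The VC dimension `VC_d(A)` of `A ⊆ Tⁿ` with respect to the quasi-metric `d` on `T`:
the maximal cardinality of a set `σ` of coordinates such that the projection of `A` onto the
coordinates in `σ` contains a product `∏_{i ∈ σ} {a i, b i}` of pairs of separated points. -/
noncomputable def vcDimQ₀ {T : Type*} {n : ℕ} (d : T → T → ℝ) (A : Set (Fin n → T)) : ℕ :=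
  sSup {m : ℕ | ∃ σ : Finset (Fin n), σ.card = m ∧ ∃ a b : Fin n → T,
    (∀ i ∈ σ, 0 < d (a i) (b i)) ∧
    ∀ z : Fin n → T, (∀ i ∈ σ, z i = a i ∨ z i = b i) → ∃ k ∈ A, ∀ i ∈ σ, k i = z i}

/-! ### Shattered cells -/

open Finset Classical in
/-- The dimension of a cell: the number of coordinates carrying a pair. -/
noncomputable def cellDim {ι T : Type*} [Fintype ι] (c : ι → Option (T × T)) : ℕ :=
  #{i | (c i).isSome}

/-- A cell `c : ι → Option (T × T)` encodes a set `σ` of coordinates, those with `c i = some _`,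
with an ordered pair of points over each of them. It is shattered by `B` if the pairs are
separated and the projection of `B` onto `σ` contains the product of the pairs. -/
def Shat {ι T : Type*} (d : T → T → ℝ) (B : Finset (ι → T)) (c : ι → Option (T × T)) : Prop :=
  (∀ i p, c i = some p → 0 < d p.1 p.2) ∧
  ∀ z : ι → T, (∀ i p, c i = some p → z i = p.1 ∨ z i = p.2) →
    ∃ k ∈ B, ∀ i p, c i = some p → k i = z i

open Finset Classical in
/-- The finite set of cells shattered by `B`. -/
noncomputable def cells {ι T : Type*} [Fintype ι] [Fintype T] (d : T → T → ℝ)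
    (B : Finset (ι → T)) : Finset (ι → Option (T × T)) :=
  {c | Shat d B c}

open Finset in
/-- The weighted count of the cells shattered by `B`, a cell of dimension `k` having
weight `w ^ k`. -/
noncomputable def cellWeight {ι T : Type*} [Fintype ι] [Fintype T] (d : T → T → ℝ) (w : ℝ)
    (B : Finset (ι → T)) : ℝ :=
  ∑ c ∈ cells d B, w ^ cellDim c

lemma Shat.mono {ι T : Type*} {d : T → T → ℝ} {B B' : Finset (ι → T)} (h : B ⊆ B')
    {c : ι → Option (T × T)} (hc : Shat d B c) : Shat d B' c := by
  refine ⟨hc.1, fun z hz => ?_⟩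
  obtain ⟨k, hk, hk'⟩ := hc.2 z hz
  exact ⟨k, h hk, hk'⟩

lemma mem_cells {ι T : Type*} [Fintype ι] [Fintype T] {d : T → T → ℝ}
    {B : Finset (ι → T)} {c : ι → Option (T × T)} : c ∈ cells d B ↔ Shat d B c := by
  simp [cells]

open Classical in
lemma Shat.eq_none {ι T : Type*} {d : T → T → ℝ} (h0 : ∀ x, d x x = 0)
    {B : Finset (ι → T)} {c : ι → Option (T × T)} {i : ι} {a : T}
    (hc : Shat d B c) (hB : ∀ x ∈ B, x i = a) : c i = none := by
  by_contra hne
  obtain ⟨p, hp⟩ := Option.ne_none_iff_exists'.1 hne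
  obtain ⟨k, hk, hk'⟩ := hc.2 (fun j => (c j).elim a (·.1)) (by
    intro j q hq; simp [hq])
  obtain ⟨l, hl, hl'⟩ := hc.2 (fun j => (c j).elim a (·.2)) (by
    intro j q hq; simp [hq])
  have h1 := hk' i p hp
  have h2 := hl' i p hp
  simp only [hp, Option.elim] at h1 h2
  have h3 := hc.1 i p hp
  rw [← h1, ← h2, hB k hk, hB l hl, h0] at h3
  exact lt_irrefl _ h3

open Classical in
/-- A cell shattered by both fibres `{x i = a}` and `{x i = b}` of `B` may be enlarged by the
pair `(a, b)` at the coordinate `i`. -/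
lemma Shat.update {ι T : Type*} {d : T → T → ℝ} (h0 : ∀ x, d x x = 0)
    {B : Finset (ι → T)} {c : ι → Option (T × T)} {i : ι} {a b : T} (hab : 0 < d a b)
    (ha : Shat d (B.filter fun x => x i = a) c) (hb : Shat d (B.filter fun x => x i = b) c) :
    Shat d B (Function.update c i (some (a, b))) := by
  have hn : c i = none := ha.eq_none h0 (a := a) (by simp)
  have key : ∀ j p, c j = some p → Function.update c i (some (a, b)) j = some p := by
    intro j p hj
    rw [Function.update_of_ne]
    · exact hj
    · rintro rfl; simp [hn] at hj
  refine ⟨fun j p hj => ?_, fun z hz => ?_⟩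
  · by_cases hji : j = i
    · subst hji
      simp at hj
      subst hj; exact hab
    · rw [Function.update_of_ne hji] at hj
      exact ha.1 j p hj
  · have hz' : ∀ j p, c j = some p → z j = p.1 ∨ z j = p.2 := fun j p hj => hz j p (key j p hj)
    have fin : ∀ e, Shat d (B.filter fun x => x i = e) c → z i = e →
        ∃ k ∈ B, ∀ j p, Function.update c i (some (a, b)) j = some p → k j = z j := by
      intro e he hze
      obtain ⟨k, hk, hk'⟩ := he.2 z hz'
      rw [Finset.mem_filter] at hk
      refine ⟨k, hk.1, fun j p hj => ?_⟩
      by_cases hji : j = i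
      · subst hji; rw [hk.2, hze]
      · rw [Function.update_of_ne hji] at hj
        exact hk' j p hj
    rcases hz i (a, b) (by simp) with h | h
    · exact fin a ha h
    · exact fin b hb h

open Classical in
lemma cellDim_update {ι T : Type*} [Fintype ι] {c : ι → Option (T × T)} {i : ι}
    (hc : c i = none) (p : T × T) :
    cellDim (Function.update c i (some p)) = cellDim c + 1 := by
  unfold cellDim
  rw [← Finset.card_insert_of_notMem (s := Finset.univ.filter fun i => (c i).isSome) (a := i)
    (by simp [hc])]
  congr 1
  ext j
  by_cases hji : j = i
  · subst hji; simp
  · simp [hji]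

/-! ### Lower bound for the weighted cell count -/

open Finset Classical in
/-- Double counting of the enlarged cells: a cell in `F` arises by enlargement at most once
for each coordinate of its support. -/
lemma sum_enlarge_le {ι T : Type*} [Fintype ι] {w : ℝ} (hw : 0 ≤ w)
    (G : Finset ι) (I : ι → Finset (ι → Option (T × T))) (s : ι → T × T)
    (F : Finset (ι → Option (T × T)))
    (h : ∀ i ∈ G, ∀ c ∈ I i, c i = none ∧ Function.update c i (some (s i)) ∈ F) :
    ∑ i ∈ G, ∑ c ∈ I i, w ^ (cellDim c + 1) ≤ ∑ c ∈ F, cellDim c * w ^ cellDim c := by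
  have h1 : ∀ i ∈ G, ∑ c ∈ I i, w ^ (cellDim c + 1) ≤
      ∑ c ∈ F.filter (fun c => (c i).isSome), w ^ cellDim c := by
    intro i hi
    have hinj : Set.InjOn (fun c : ι → Option (T × T) => Function.update c i (some (s i)))
        (I i : Set (ι → Option (T × T))) := by
      intro c hc c' hc' hcc
      funext j
      by_cases hji : j = i
      · subst hji; rw [(h j hi c hc).1, (h j hi c' hc').1]
      · have := congrFun hcc j
        simpa [hji] using this
    have h2 : ∑ c ∈ I i, w ^ (cellDim c + 1) =
        ∑ c ∈ (I i).image (fun c => Function.update c i (some (s i))), w ^ cellDim c := by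
      rw [Finset.sum_image hinj]
      exact Finset.sum_congr rfl fun c hc => by rw [cellDim_update (h i hi c hc).1]
    rw [h2]
    apply Finset.sum_le_sum_of_subset_of_nonneg
    · intro c hc
      obtain ⟨c', hc', rfl⟩ := Finset.mem_image.1 hc
      simp [(h i hi c' hc').2]
    · intros; positivity
  calc _ ≤ ∑ i ∈ G, ∑ c ∈ F.filter (fun c => (c i).isSome), w ^ cellDim c :=
        Finset.sum_le_sum h1
    _ ≤ ∑ i, ∑ c ∈ F.filter (fun c => (c i).isSome), w ^ cellDim c :=
        Finset.sum_le_sum_of_subset_of_nonneg (Finset.subset_univ _) fun i _ _ =>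
          Finset.sum_nonneg fun c _ => by positivity
    _ = ∑ c ∈ F, ∑ i, if (c i).isSome then w ^ cellDim c else 0 := by
        simp_rw [Finset.sum_filter]
        exact Finset.sum_comm
    _ = _ := by
        refine Finset.sum_congr rfl fun c _ => ?_
        rw [← Finset.sum_filter, Finset.sum_const, nsmul_eq_mul]
        rfl

open Finset Classical in
/-- If every two points of `B` are separated in at least `e * |ι|` coordinates, then a proportion
`e / 4` of the coordinates admits a separated pair of values, both with large fibres. -/
lemma card_good {ι T : Type*} [Fintype ι] [Fintype T] (d : T → T → ℝ) {e : ℝ} (he : 0 < e)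
    (B : Finset (ι → T)) (hB : 2 ≤ #B)
    (hsep : ∀ x ∈ B, ∀ y ∈ B, x ≠ y → e * Fintype.card ι ≤ #{i | 0 < d (x i) (y i)}) :
    e * Fintype.card ι / 4 ≤ #{i | ∃ a b, 0 < d a b ∧
      (#B : ℝ) ≤ 4 * (Fintype.card T : ℝ) ^ 2 / e * #(B.filter fun x => x i = a) ∧
      (#B : ℝ) ≤ 4 * (Fintype.card T : ℝ) ^ 2 / e * #(B.filter fun x => x i = b)} := by
  set M : ℝ := (#B : ℝ) with hM
  have hM2 : (2 : ℝ) ≤ M := by rw [hM]; exact_mod_cast hB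
  set t : ℝ := (Fintype.card T : ℝ) with ht
  set n : ℝ := (Fintype.card ι : ℝ) with hn
  have hn0 : 0 ≤ n := by rw [hn]; positivity
  set G : Finset ι := {i | ∃ a b, 0 < d a b ∧
      M ≤ 4 * t ^ 2 / e * #(B.filter fun x => x i = a) ∧
      M ≤ 4 * t ^ 2 / e * #(B.filter fun x => x i = b)} with hG
  let P : ι → ℝ := fun i => #{p ∈ B ×ˢ B | 0 < d (p.1 i) (p.2 i)}
  have lower : M ^ 2 / 2 * (e * n) ≤ ∑ i, P i := by
    have h1 : ∑ i, P i = ∑ p ∈ B ×ˢ B, (#{i | 0 < d (p.1 i) (p.2 i)} : ℝ) := by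
      simp only [P, Finset.card_filter, Nat.cast_sum]
      exact Finset.sum_comm
    have h2 : ∑ p ∈ B.offDiag, (e * n) ≤
        ∑ p ∈ B ×ˢ B, (#{i | 0 < d (p.1 i) (p.2 i)} : ℝ) := by
      refine (Finset.sum_le_sum fun p hp => ?_).trans
        (Finset.sum_le_sum_of_subset_of_nonneg (s := B.offDiag) ?_ fun _ _ _ => by positivity)
      · rw [Finset.mem_offDiag] at hp
        exact hsep _ hp.1 _ hp.2.1 hp.2.2
      · intro p hp
        rw [Finset.mem_offDiag] at hp
        exact Finset.mem_product.2 ⟨hp.1, hp.2.1⟩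
    rw [h1]
    refine le_trans ?_ h2
    rw [Finset.sum_const, nsmul_eq_mul]
    apply mul_le_mul_of_nonneg_right _ (by positivity)
    rw [Finset.offDiag_card, Nat.cast_sub (Nat.le_mul_self _), Nat.cast_mul, ← hM]
    nlinarith
  have upG : ∀ i ∈ G, P i ≤ M ^ 2 := by
    intro i _
    have : #{p ∈ B ×ˢ B | 0 < d (p.1 i) (p.2 i)} ≤ #B * #B :=
      (Finset.card_filter_le _ _).trans (Finset.card_product _ _).le
    calc P i ≤ ((#B * #B : ℕ) : ℝ) := by
          simp only [P]; exact_mod_cast this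
      _ = M ^ 2 := by push_cast; ring
  have upN : ∀ i ∉ G, P i ≤ e / 4 * M ^ 2 := by
    intro i hi
    have h1 : P i = ∑ q : T × T,
        (#{p ∈ {p ∈ B ×ˢ B | 0 < d (p.1 i) (p.2 i)} | (p.1 i, p.2 i) = q} : ℝ) := by
      simp only [P]
      rw [Finset.card_eq_sum_card_fiberwise
        (f := fun p : (ι → T) × (ι → T) => (p.1 i, p.2 i)) (t := Finset.univ)
        (fun _ _ => by simp)]
      push_cast
      rfl
    have h2 : ∀ q : T × T, t ^ 2 *
        (#{p ∈ {p ∈ B ×ˢ B | 0 < d (p.1 i) (p.2 i)} | (p.1 i, p.2 i) = q} : ℝ) ≤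
          e / 4 * M ^ 2 := by
      rintro ⟨a, b⟩
      by_cases hab : 0 < d a b
      · have h3 : (#{p ∈ {p ∈ B ×ˢ B | 0 < d (p.1 i) (p.2 i)} | (p.1 i, p.2 i) = (a, b)} : ℝ) ≤
            #(B.filter fun x => x i = a) * #(B.filter fun x => x i = b) := by
          rw [← Nat.cast_mul, ← Finset.card_product]
          norm_cast
          apply Finset.card_le_card
          intro p hp
          simp only [Finset.mem_filter, Finset.mem_product, Prod.mk.injEq] at hp ⊢
          tauto
        have hA : (#(B.filter fun x => x i = a) : ℝ) ≤ M := by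
          rw [hM]; exact_mod_cast Finset.card_filter_le _ _
        have hBb : (#(B.filter fun x => x i = b) : ℝ) ≤ M := by
          rw [hM]; exact_mod_cast Finset.card_filter_le _ _
        set α : ℝ := (#(B.filter fun x => x i = a) : ℝ) with hα
        set β : ℝ := (#(B.filter fun x => x i = b) : ℝ) with hβ
        have hα0 : 0 ≤ α := by positivity
        have hβ0 : 0 ≤ β := by positivity
        have hor : 4 * t ^ 2 / e * α ≤ M ∨ 4 * t ^ 2 / e * β ≤ M := by
          by_contra! hcon
          exact hi (by
            rw [hG, Finset.mem_filter]
            exact ⟨Finset.mem_univ _, a, b, hab, hcon.1.le, hcon.2.le⟩)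
        have aux : ∀ u, 4 * t ^ 2 / e * u ≤ M → t ^ 2 * u ≤ e / 4 * M := by
          intro u hu
          have : t ^ 2 * u = e / 4 * (4 * t ^ 2 / e * u) := by field_simp
          rw [this]
          gcongr
        calc _ ≤ t ^ 2 * (α * β) := by gcongr
          _ ≤ e / 4 * M ^ 2 := by
            rcases hor with h | h
            · calc t ^ 2 * (α * β) = (t ^ 2 * α) * β := by ring
                _ ≤ (e / 4 * M) * M := by
                  have := aux _ h
                  gcongr
                _ = _ := by ring
            · calc t ^ 2 * (α * β) = (t ^ 2 * β) * α := by ring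
                _ ≤ (e / 4 * M) * M := by
                  have := aux _ h
                  gcongr
                _ = _ := by ring
      · have : {p ∈ {p ∈ B ×ˢ B | 0 < d (p.1 i) (p.2 i)} | (p.1 i, p.2 i) = (a, b)} = ∅ := by
          ext p
          simp only [Finset.mem_filter, Prod.mk.injEq, Finset.notMem_empty, iff_false]
          rintro ⟨⟨_, h⟩, h1, h2⟩
          rw [h1, h2] at h
          exact hab h
        rw [this]
        simp only [Finset.card_empty, Nat.cast_zero, mul_zero]
        positivity
    have h3 := Finset.sum_le_sum fun q (_ : q ∈ (Finset.univ : Finset (T × T))) => h2 q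
    rw [← Finset.mul_sum, ← h1, Finset.sum_const, Finset.card_univ, Fintype.card_prod,
      nsmul_eq_mul] at h3
    push_cast at h3
    rw [← ht] at h3
    have htpos : 0 < t := by
      rw [ht]
      have : B.Nonempty := Finset.card_pos.1 (by omega)
      obtain ⟨x, _⟩ := this
      have : Nonempty T := ⟨x i⟩
      exact_mod_cast Fintype.card_pos
    have h4 : t ^ 2 * P i ≤ t ^ 2 * (e / 4 * M ^ 2) := by linarith
    exact le_of_mul_le_mul_left h4 (by positivity)
  have upper : ∑ i, P i ≤ #G * M ^ 2 + n * (e / 4 * M ^ 2) := by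
    rw [← Finset.sum_add_sum_compl G]
    apply add_le_add
    · calc _ ≤ ∑ i ∈ G, M ^ 2 := Finset.sum_le_sum upG
        _ = _ := by simp
    · calc _ ≤ ∑ i ∈ Gᶜ, e / 4 * M ^ 2 :=
            Finset.sum_le_sum fun i hi => upN i (Finset.mem_compl.1 hi)
        _ = #Gᶜ * (e / 4 * M ^ 2) := by simp
        _ ≤ _ := by
          gcongr
          rw [hn]
          exact_mod_cast Finset.card_le_univ _
  have hMp : 0 < M ^ 2 := by positivity
  have : e * n / 4 * M ^ 2 ≤ #G * M ^ 2 := by nlinarith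
  exact le_of_mul_le_mul_right this hMp

open Finset Classical in
/-- Growth of the weighted cell count. At a good coordinate `i` the two fibres have weights at
least `(3 / 2) ^ k` each. Either for some `i` the union of their cells already has weight
`(3 / 2) ^ (k + 1)`, or for all good `i` the common cells weigh at least half of `(3 / 2) ^ k`,
and the enlargements of the latter over all good coordinates suffice. -/
lemma growth {ι T : Type*} [Fintype ι] [Fintype T] [Nonempty ι] (d : T → T → ℝ)
    (h0 : ∀ x, d x x = 0) {e : ℝ} (he : 0 < e) (he1 : e ≤ 1) {v : ℕ} (hv : 0 < v) (k : ℕ) :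
    ∀ B : Finset (ι → T),
    (∀ x ∈ B, ∀ y ∈ B, x ≠ y → e * Fintype.card ι ≤ #{i | 0 < d (x i) (y i)}) →
    (∀ c ∈ cells d B, cellDim c ≤ v) →
    (4 * (Fintype.card T : ℝ) ^ 2 / e) ^ k ≤ #B → B.Nonempty →
    (3 / 2 : ℝ) ^ k ≤ cellWeight d (12 * v / (e * Fintype.card ι)) B := by
  have hn0 : (0 : ℝ) < Fintype.card ι := by exact_mod_cast Fintype.card_pos
  have hv0 : (0 : ℝ) < v := by exact_mod_cast hv
  set w : ℝ := 12 * v / (e * Fintype.card ι) with hw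
  have hw0 : 0 < w := by positivity
  induction k with
  | zero =>
    intro B _ _ _ hne
    obtain ⟨x, hx⟩ := hne
    have hmem : (fun _ => none : ι → Option (T × T)) ∈ cells d B := by
      rw [mem_cells]
      exact ⟨by simp, fun z _ => ⟨x, hx, by simp⟩⟩
    calc ((3 : ℝ) / 2) ^ 0 = w ^ cellDim (fun _ => none : ι → Option (T × T)) := by
          simp [cellDim]
      _ ≤ _ := Finset.single_le_sum (f := fun c => w ^ cellDim c)
          (fun c _ => by positivity) hmem
  | succ k ih =>
    intro B hsep hdim hcard hne
    set r : ℝ := 4 * (Fintype.card T : ℝ) ^ 2 / e with hr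
    have hr4 : 4 ≤ r := by
      obtain ⟨x, _⟩ := hne
      have : Nonempty T := ⟨x (Classical.arbitrary ι)⟩
      have : (1 : ℝ) ≤ Fintype.card T := by exact_mod_cast Fintype.card_pos (α := T)
      rw [hr, le_div_iff₀ he]
      nlinarith
    have hB2 : 2 ≤ #B := by
      have h1 : r ≤ r ^ (k + 1) := le_self_pow₀ (by linarith) (by omega)
      have : (2 : ℝ) ≤ #B := by linarith
      exact_mod_cast this
    have hgood := card_good d he B hB2 hsep
    rw [← hr] at hgood
    set G : Finset ι := {i | ∃ a b, 0 < d a b ∧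
      (#B : ℝ) ≤ r * #(B.filter fun x => x i = a) ∧
      (#B : ℝ) ≤ r * #(B.filter fun x => x i = b)} with hG
    have hex : ∀ i, ∃ s : T × T, i ∈ G → 0 < d s.1 s.2 ∧
      (#B : ℝ) ≤ r * #(B.filter fun x => x i = s.1) ∧
      (#B : ℝ) ≤ r * #(B.filter fun x => x i = s.2) := by
      intro i
      by_cases hi : i ∈ G
      · obtain ⟨a, b, h⟩ := (Finset.mem_filter.1 hi).2
        exact ⟨(a, b), fun _ => h⟩
      · obtain ⟨x, _⟩ := hne
        exact ⟨(x i, x i), fun h => absurd h hi⟩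
    choose s hs using hex
    have hrec : ∀ i ∈ G, ∀ u, (#B : ℝ) ≤ r * #(B.filter fun x => x i = u) →
        (3 / 2 : ℝ) ^ k ≤ cellWeight d w (B.filter fun x => x i = u) := by
      intro i _ u hu
      have hsub := Finset.filter_subset (fun x => x i = u) B
      have hrk : r ^ k ≤ #(B.filter fun x => x i = u) := by
        rw [pow_succ] at hcard
        have : r * r ^ k ≤ r * #(B.filter fun x => x i = u) := by linarith
        exact le_of_mul_le_mul_left this (by linarith)
      refine ih _ (fun x hx y hy => hsep x (hsub hx) y (hsub hy))
        (fun c hc => hdim c (mem_cells.2 ((mem_cells.1 hc).mono hsub))) hrk ?_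
      have : (0 : ℝ) < #(B.filter fun x => x i = u) := lt_of_lt_of_le (by positivity) hrk
      exact Finset.card_pos.1 (by exact_mod_cast this)
    set q : ℝ := (3 / 2 : ℝ) ^ k with hq
    have hq0 : 0 < q := by positivity
    let Fa : ι → Finset (ι → Option (T × T)) := fun i => cells d (B.filter fun x => x i = (s i).1)
    let Fb : ι → Finset (ι → Option (T × T)) := fun i => cells d (B.filter fun x => x i = (s i).2)
    by_cases hcase : ∃ i ∈ G, 3 / 2 * q ≤ ∑ c ∈ Fa i ∪ Fb i, w ^ cellDim c
    · obtain ⟨i, hi, hle⟩ := hcase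
      rw [pow_succ, mul_comm]
      refine hle.trans (Finset.sum_le_sum_of_subset_of_nonneg ?_ fun _ _ _ => by positivity)
      intro c hc
      rw [mem_cells]
      rcases Finset.mem_union.1 hc with h | h
      · exact (mem_cells.1 h).mono (Finset.filter_subset _ _)
      · exact (mem_cells.1 h).mono (Finset.filter_subset _ _)
    · push Not at hcase
      have hint : ∀ i ∈ G, q / 2 ≤ ∑ c ∈ Fa i ∩ Fb i, w ^ cellDim c := by
        intro i hi
        have h1 := hcase i hi
        have h2 := Finset.sum_union_inter (s₁ := Fa i) (s₂ := Fb i)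
          (f := fun c => w ^ cellDim c)
        have h3 : q ≤ ∑ c ∈ Fa i, w ^ cellDim c := hrec i hi _ (hs i hi).2.1
        have h4 : q ≤ ∑ c ∈ Fb i, w ^ cellDim c := hrec i hi _ (hs i hi).2.2
        linarith
      have hdc := sum_enlarge_le hw0.le G (fun i => Fa i ∩ Fb i) s (cells d B) (by
        intro i hi c hc
        rw [Finset.mem_inter] at hc
        have ha := mem_cells.1 hc.1
        have hb := mem_cells.1 hc.2
        exact ⟨ha.eq_none h0 (a := (s i).1) (by simp),
          mem_cells.2 (Shat.update h0 (hs i hi).1 ha hb)⟩)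
      have hup : ∑ c ∈ cells d B, cellDim c * w ^ cellDim c ≤ v * cellWeight d w B := by
        rw [cellWeight, Finset.mul_sum]
        refine Finset.sum_le_sum fun c hc => ?_
        have : (cellDim c : ℝ) ≤ v := by exact_mod_cast hdim c hc
        gcongr
      have hlow : #G * (w * (q / 2)) ≤
          ∑ i ∈ G, ∑ c ∈ Fa i ∩ Fb i, w ^ (cellDim c + 1) := by
        rw [← nsmul_eq_mul, ← Finset.sum_const]
        refine Finset.sum_le_sum fun i hi => ?_
        simp_rw [pow_succ']
        rw [← Finset.mul_sum]
        have := hint i hi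
        gcongr
      have hfin : v * (3 / 2 * q) ≤ #G * (w * (q / 2)) := by
        calc v * (3 / 2 * q) = e * Fintype.card ι / 4 * (w * (q / 2)) := by
              rw [hw]; field_simp; norm_num
          _ ≤ _ := by gcongr
      have : v * (3 / 2 * q) ≤ v * cellWeight d w B := by linarith
      rw [pow_succ, mul_comm]
      exact le_of_mul_le_mul_left this hv0

/-! ### Upper bound for the weighted cell count -/

open Finset Classical in
/-- Upper bound for the weighted cell count in terms of the maximal dimension of a cell. -/
lemma cellWeight_le {ι T : Type*} [Fintype ι] [Fintype T] [Nonempty ι] (d : T → T → ℝ)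
    {e : ℝ} (he : 0 < e) (he1 : e ≤ 1) {v : ℕ} (hT : 0 < Fintype.card T) (B : Finset (ι → T))
    (hdim : ∀ c ∈ cells d B, cellDim c ≤ v) :
    cellWeight d (12 * v / (e * Fintype.card ι)) B ≤
      (12 * Real.exp 1 * (Fintype.card T : ℝ) ^ 2 / e) ^ v := by
  have hn0 : (0 : ℝ) < Fintype.card ι := by exact_mod_cast Fintype.card_pos
  have ht1 : (1 : ℝ) ≤ Fintype.card T := by exact_mod_cast hT
  set w : ℝ := 12 * v / (e * Fintype.card ι) with hw
  have hw0 : 0 ≤ w := by positivity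
  set t : ℝ := (Fintype.card T : ℝ) with ht
  set n : ℝ := (Fintype.card ι : ℝ) with hn
  -- Since `dim c ≤ v`, each term may be multiplied by `Y ^ (v - dim c) ≥ 1`, after which the sum
  -- over all cells factorizes. The choice of `Y` makes `w * t ^ 2 / Y` equal to `v / n`.
  set Y : ℝ := 12 * t ^ 2 / e with hY
  have hY1 : 1 ≤ Y := by
    rw [hY, le_div_iff₀ he]; nlinarith
  have hY0 : 0 < Y := by linarith
  have h1 : cellWeight d w B ≤ ∑ c : ι → Option (T × T), Y ^ v * (w / Y) ^ cellDim c := by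
    refine (Finset.sum_le_sum (g := fun c => Y ^ v * (w / Y) ^ cellDim c) fun c hc => ?_).trans
      (Finset.sum_le_sum_of_subset_of_nonneg (Finset.subset_univ _) fun _ _ _ => by positivity)
    have : Y ^ cellDim c ≤ Y ^ v := pow_le_pow_right₀ hY1 (hdim c hc)
    calc w ^ cellDim c = Y ^ cellDim c * (w / Y) ^ cellDim c := by
          rw [← mul_pow]; congr 1; field_simp
      _ ≤ _ := by gcongr
  have h2 : ∑ c : ι → Option (T × T), (w / Y) ^ cellDim c = (1 + w * t ^ 2 / Y) ^ Fintype.card ι := by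
    have h3 : ∀ c : ι → Option (T × T), (w / Y) ^ cellDim c =
        ∏ i, (if (c i).isSome then w / Y else 1) := by
      intro c
      rw [Finset.prod_ite, Finset.prod_const, Finset.prod_const_one, mul_one]
      rfl
    simp_rw [h3]
    have h4 := Finset.prod_univ_sum (fun _ : ι => (Finset.univ : Finset (Option (T × T))))
      (fun _ o => if o.isSome then w / Y else (1 : ℝ))
    rw [Fintype.piFinset_univ] at h4
    rw [← h4, Finset.prod_const, Finset.card_univ]
    congr 1
    rw [Fintype.sum_option]
    simp [Fintype.card_prod, ← ht]
    ring
  have h5 : w * t ^ 2 / Y = v / n := by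
    have : 0 < t := by linarith
    rw [hw, hY]; field_simp
  have h6 : (1 + v / n) ^ Fintype.card ι ≤ Real.exp 1 ^ v := by
    calc (1 + v / n) ^ Fintype.card ι ≤ Real.exp (v / n) ^ Fintype.card ι := by
          gcongr
          rw [add_comm]
          exact Real.add_one_le_exp _
      _ = Real.exp 1 ^ v := by
          rw [← Real.exp_nat_mul, ← Real.exp_nat_mul, ← hn]
          congr 1; field_simp
  rw [← Finset.mul_sum, h2, h5] at h1
  calc _ ≤ _ := h1
    _ ≤ Y ^ v * Real.exp 1 ^ v := by gcongr
    _ = _ := by rw [← mul_pow, hY]; congr 1; ring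

/-! ### Cells and the VC dimension -/

open Classical in
lemma le_vcDimQ₀ {T : Type*} {n : ℕ} (d : T → T → ℝ) (A : Set (Fin n → T))
    (σ : Finset (Fin n)) (a b : Fin n → T) (h1 : ∀ i ∈ σ, 0 < d (a i) (b i))
    (h2 : ∀ z : Fin n → T, (∀ i ∈ σ, z i = a i ∨ z i = b i) → ∃ k ∈ A, ∀ i ∈ σ, k i = z i) :
    σ.card ≤ vcDimQ₀ d A := by
  apply le_csSup
  · refine ⟨n, ?_⟩
    rintro m ⟨τ, rfl, -⟩
    simpa using Finset.card_le_univ τ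
  · exact ⟨σ, rfl, a, b, h1, h2⟩

lemma cellDim_le_vc {T : Type*} [Fintype T] {n : ℕ} (d : T → T → ℝ) (A : Set (Fin n → T))
    (B : Finset (Fin n → T)) (hBA : ∀ x ∈ B, x ∈ A) (hB : B.Nonempty)
    (c : Fin n → Option (T × T))
    (hc : c ∈ cells d B) : cellDim c ≤ vcDimQ₀ d A := by
  rw [mem_cells] at hc
  -- A point of `B` provides the irrelevant values outside the support of `c`.
  obtain ⟨x, hx⟩ := hB
  unfold cellDim
  refine le_vcDimQ₀ d A _ (fun i => (c i).elim (x i) (·.1)) (fun i => (c i).elim (x i) (·.2))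
    (fun i hi => ?_) fun z hz => ?_
  · obtain ⟨p, hp⟩ := Option.isSome_iff_exists.1 (Finset.mem_filter.1 hi).2
    simpa [hp] using hc.1 i p hp
  · obtain ⟨k, hk, hk'⟩ := hc.2 z (fun i p hp => by
      have := hz i (by simp [hp])
      simpa [hp] using this)
    refine ⟨k, hBA k hk, fun i hi => ?_⟩
    obtain ⟨p, hp⟩ := Option.isSome_iff_exists.1 (Finset.mem_filter.1 hi).2
    exact hk' i p hp

/-! ### Separated sets and covering numbers -/

open Finset Classical in
/-- A maximal `ε`-separated subset of `A` is an `ε`-net. -/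
lemma exists_separated {S : Type*} [Fintype S] (ρ : S → S → ℝ) (hs : ∀ x y, ρ x y = ρ y x)
    {ε : ℝ} (h0 : ∀ x, ρ x x ≤ ε) (A : Set S) :
    ∃ B : Finset S, (∀ x ∈ B, x ∈ A) ∧ (∀ x ∈ B, ∀ y ∈ B, x ≠ y → ε < ρ x y) ∧
      covNQMetric ρ A ε ≤ #B := by
  obtain ⟨B, hB, hmax⟩ := Finset.exists_max_image
    (Finset.univ.filter fun B : Finset S =>
      (∀ x ∈ B, x ∈ A) ∧ (∀ x ∈ B, ∀ y ∈ B, x ≠ y → ε < ρ x y)) Finset.card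
    ⟨∅, by simp⟩
  rw [Finset.mem_filter] at hB
  obtain ⟨-, hBA, hsep⟩ := hB
  refine ⟨B, hBA, hsep, Nat.sInf_le ⟨B, rfl, fun a ha => ?_⟩⟩
  by_contra! hcon
  have haB : a ∉ B := fun h => absurd (hcon a h) (not_lt.2 (h0 a))
  have := hmax (insert a B) (by
    rw [Finset.mem_filter]
    refine ⟨Finset.mem_univ _, ?_, ?_⟩
    · intro x hx
      rcases Finset.mem_insert.1 hx with rfl | h
      · exact ha
      · exact hBA x h
    · intro x hx y hy hxy
      rcases Finset.mem_insert.1 hx with rfl | h <;> rcases Finset.mem_insert.1 hy with rfl | h'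
      · exact absurd rfl hxy
      · exact hcon y h'
      · rw [hs]; exact hcon x h
      · exact hsep x h y h' hxy)
  rw [Finset.card_insert_of_notMem haB] at this
  omega

/-! ### Numerical conclusion -/

/-- The numerical conclusion: `r = 4 t ^ 2 / ε` is the loss of cardinality at each step, and `k`
the number of steps that a set of cardinality `N` allows. -/
lemma numeric {t ε N v : ℝ} {k : ℕ} (ht : 2 ≤ t) (hε : 0 < ε) (hε1 : ε < 1) (hv : 1 ≤ v)
    (hN : 1 ≤ N) (h1 : N < (4 * t ^ 2 / ε) ^ (k + 1))
    (h2 : k * Real.log (3 / 2) ≤ v * Real.log (12 * Real.exp 1 * t ^ 2 / ε)) :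
    Real.log N ≤ 200 * Real.log (t / ε) ^ 2 * v := by
  have hl2 : 1 / 2 ≤ Real.log 2 := by have := Real.log_two_gt_d9; linarith
  have hte : 2 ≤ t / ε := by rw [le_div_iff₀ hε]; nlinarith
  have ht0 : 0 < t := by linarith
  set l := Real.log (t / ε) with hl
  have hll : Real.log 2 ≤ l := Real.log_le_log (by norm_num) hte
  have bnd : ∀ m : ℕ, ∀ y : ℝ, 0 < y → y ≤ 2 ^ m → Real.log (y * t ^ 2 / ε) ≤ (m + 2) * l := by
    intro m y hy hym
    have h3 : y * t ^ 2 / ε ≤ (t / ε) ^ (m + 2) := by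
      calc y * t ^ 2 / ε = y * (t ^ 2 / ε) := by ring
        _ ≤ (t / ε) ^ m * (t / ε) ^ 2 := by
          have e1 : y ≤ (t / ε) ^ m := hym.trans (by gcongr)
          have e2 : t ^ 2 / ε ≤ (t / ε) ^ 2 := by
            rw [div_pow]
            gcongr
            nlinarith
          gcongr
        _ = _ := by ring
    calc _ ≤ Real.log ((t / ε) ^ (m + 2)) := Real.log_le_log (by positivity) h3
      _ = _ := by rw [Real.log_pow]; push_cast; rfl
  have hr : Real.log (4 * t ^ 2 / ε) ≤ 4 * l := by
    have := bnd 2 4 (by norm_num) (by norm_num)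
    push_cast at this; linarith
  have hE : Real.log (12 * Real.exp 1 * t ^ 2 / ε) ≤ 8 * l := by
    have := bnd 6 (12 * Real.exp 1) (by positivity) (by
      have := Real.exp_one_lt_d9; norm_num at this ⊢; linarith)
    push_cast at this; linarith
  have h32 : 1 / 3 ≤ Real.log (3 / 2) := by
    have := Real.one_sub_inv_le_log_of_pos (x := 3 / 2) (by norm_num)
    norm_num at this ⊢; linarith
  have hk : (k : ℝ) ≤ 24 * l * v := by
    have hk0 : (0 : ℝ) ≤ k := by positivity
    nlinarith
  have hlog : Real.log N ≤ (k + 1) * Real.log (4 * t ^ 2 / ε) := by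
    have := Real.log_le_log (by linarith) h1.le
    rw [Real.log_pow] at this
    push_cast at this; exact this
  have hl0 : 1 / 2 ≤ l := hl2.trans hll
  have hone : 1 ≤ 2 * l * v := by nlinarith
  calc Real.log N ≤ (k + 1) * Real.log (4 * t ^ 2 / ε) := hlog
    _ ≤ (26 * l * v) * (4 * l) := by
      have : (k : ℝ) + 1 ≤ 26 * l * v := by linarith
      have : 0 ≤ Real.log (4 * t ^ 2 / ε) :=
        Real.log_nonneg (by rw [le_div_iff₀ hε]; nlinarith)
      gcongr
    _ ≤ _ := by
      have : 0 ≤ l ^ 2 * v := by positivity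
      nlinarith

theorem entropy_le_vc_product :
    ∃ C : ℝ, 0 < C ∧
      ∀ (T : Type) [Fintype T] (d : T → T → ℝ) (n : ℕ) (A : Set (Fin n → T)) (ε : ℝ),
        (∀ x y, d x y = d y x) → (∀ x, d x x = 0) → (∀ x y, 0 ≤ d x y) →
        (∀ x y, d x y ≤ 1) →
        0 < n → 0 < ε → ε < 1 →
        Real.log (covNQMetric (fun x y : Fin n → T => (∑ i, d (x i) (y i)) / n) A ε) ≤
          C * (Real.log (Fintype.card T / ε)) ^ 2 * vcDimQ₀ d A := by
  classical
  refine ⟨200, by norm_num, ?_⟩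
  intro T _ d n A ε hsymm h0 hnn h1 hn hε hε1
  have : Nonempty (Fin n) := ⟨⟨0, hn⟩⟩
  have hn' : (0 : ℝ) < n := by exact_mod_cast hn
  obtain ⟨B, hBA, hsep, hcov⟩ := exists_separated
    (fun x y : Fin n → T => (∑ i, d (x i) (y i)) / n)
    (fun x y => by simp only [hsymm (x _)]) (ε := ε) (fun x => by simp [h0, hε.le]) A
  set N := covNQMetric (fun x y : Fin n → T => (∑ i, d (x i) (y i)) / n) A ε
  by_cases hN : N ≤ 1
  · have : Real.log N = 0 := by
      interval_cases N <;> simp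
    rw [this]; positivity
  push Not at hN
  have hsep' : ∀ x ∈ B, ∀ y ∈ B, x ≠ y →
      ε * Fintype.card (Fin n) ≤ (Finset.univ.filter fun i => 0 < d (x i) (y i)).card := by
    intro x hx y hy hxy
    have h3 := hsep x hx y hy hxy
    rw [lt_div_iff₀ hn'] at h3
    rw [Fintype.card_fin]
    refine h3.le.trans ?_
    rw [Finset.card_filter]
    push_cast
    refine Finset.sum_le_sum fun i _ => ?_
    split_ifs with h
    · exact_mod_cast h1 _ _
    · simpa using h
  obtain ⟨x, hx, y, hy, hxy⟩ := Finset.one_lt_card.1 (lt_of_lt_of_le hN hcov)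
  obtain ⟨i, hi⟩ : ∃ i, 0 < d (x i) (y i) := by
    have h3 := hsep' x hx y hy hxy
    rw [Fintype.card_fin] at h3
    have h4 : (0 : ℝ) < (Finset.univ.filter fun i => 0 < d (x i) (y i)).card :=
      lt_of_lt_of_le (by positivity) h3
    obtain ⟨i, hi⟩ := Finset.card_pos.1 (by exact_mod_cast h4)
    exact ⟨i, (Finset.mem_filter.1 hi).2⟩
  have hv : 1 ≤ vcDimQ₀ d A := by
    have := le_vcDimQ₀ d A {i} x y (by simpa using hi) (by
      intro z hz
      rcases hz i (by simp) with h | h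
      · exact ⟨x, hBA x hx, by simp [h]⟩
      · exact ⟨y, hBA y hy, by simp [h]⟩)
    simpa using this
  have hT : 2 ≤ Fintype.card T := by
    have : x i ≠ y i := fun h => by rw [h, h0] at hi; exact lt_irrefl _ hi
    exact Fintype.one_lt_card_iff.2 ⟨_, _, this⟩
  set v := vcDimQ₀ d A with hvdef
  have hT' : (2 : ℝ) ≤ Fintype.card T := by exact_mod_cast hT
  set t : ℝ := (Fintype.card T : ℝ) with ht
  have hr1 : 1 < 4 * t ^ 2 / ε := by rw [lt_div_iff₀ hε]; nlinarith
  have hB1 : (1 : ℝ) ≤ B.card := by exact_mod_cast hN.le.trans hcov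
  obtain ⟨k, hk1, hk2⟩ := exists_nat_pow_near hB1 hr1
  have hdim := cellDim_le_vc d A B hBA ⟨x, hx⟩
  have hgr := growth d h0 hε hε1.le hv k B hsep' hdim hk1 ⟨x, hx⟩
  have hle := hgr.trans (cellWeight_le d hε hε1.le (by omega) B hdim)
  have hlog := Real.log_le_log (by positivity) hle
  rw [Real.log_pow, Real.log_pow] at hlog
  refine (Real.log_le_log (by positivity) (by exact_mod_cast hcov)).trans
    (numeric hT' hε hε1 (by exact_mod_cast hv) hB1 hk2 hlog)
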